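/- Fix real numbers λ₁ > λ₂ > λ₃ > λ₄ with λᵢ+λⱼ > 0 for all i ≠ j, and consider the Euclidean gradients in ℝ⁶ of C₁(x,y) = (1/2)Σ(xᵢ²+yᵢ²), C₂(x,y) = Σxᵢyᵢ, and I(x,y) = (λ₂²+λ₃²)x₁² + (λ₁²+λ₃²)x₂² + (λ₁²+λ₂²)x₃² + (λ₁²+λ₄²)y₁² + (λ₂²+λ₄²)y₂² + (λ₃²+λ₄²)y₃². (i) If p is a point of one of the coordinate planes t₁ = {x₂=x₃=y₂=y₃=0}, t₂ = {x₁=x₃=y₁=y₃=0}, t₃ = {x₁=x₂=y₁=y₂=0} whose two possibly nonzero coordinates (α,β) satisfy α² ≠ β², then ∇I(p) lies in the linear span of ∇C₁(p) and ∇C₂(p). (ii) If p = (a₁/(λ₁+λ₄), a₂/(λ₂+λ₄), a₃/(λ₃+λ₄), ε a₁/(λ₂+λ₃), ε a₂/(λ₁+λ₃), ε a₃/(λ₁+λ₂)) with ε ∈ {+1,−1} and at least two of a₁,a₂,a₃ nonzero, then ∇I(p) does NOT lie in the linear span of ∇C₁(p) and ∇C₂(p). -/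

import Mathlib

/-!
At a point `p` the covector identity `dI = c dC₁ + d dC₂` splits into one `2 × 2` system per
coordinate pair `(x, y) = (xᵢ, yᵢ)`, namely `2 A x = c x + d y` and `2 B y = c y + d x`, where
`A`, `B` are the coefficients of `xᵢ²`, `yᵢ²` in `I` (`fderiv_eq_iff`).

On a plane `tᵢ` only one pair is nonzero, and its system has determinant `x² - y²` in `(c, d)`,
hence is solvable (`exists_pair_solution`).

If `x, y ≠ 0`, multiplying the two equations gives `(2A - c)(2B - c) = d²` (`pair_product`).
Since `A + B = λ₁² + λ₂² + λ₃² + λ₄²` is the same for all three pairs, two such pairs must have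
the same product `A B`. The differences of these products are, up to sign, products
`(λᵢ² - λⱼ²)(λₖ² - λₗ²)` with `{i, j, k, l} = {1, 2, 3, 4}`, which do not vanish.
-/

/-- The SO(4) free rigid body vector field on `ℝ⁶`, in coordinates
`(x₁,x₂,x₃,y₁,y₂,y₃) = (p 0, p 1, p 2, p 3, p 4, p 5)`. -/
noncomputable def rbF (l1 l2 l3 l4 : ℝ) (p : Fin 6 → ℝ) : Fin 6 → ℝ :=
  ![(1/(l1+l2) - 1/(l1+l3)) * (p 1 * p 2) + (1/(l3+l4) - 1/(l2+l4)) * (p 4 * p 5),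
    (1/(l2+l3) - 1/(l1+l2)) * (p 0 * p 2) + (1/(l1+l4) - 1/(l3+l4)) * (p 3 * p 5),
    (1/(l1+l3) - 1/(l2+l3)) * (p 0 * p 1) + (1/(l2+l4) - 1/(l1+l4)) * (p 3 * p 4),
    (1/(l3+l4) - 1/(l1+l3)) * (p 1 * p 5) + (1/(l1+l2) - 1/(l2+l4)) * (p 2 * p 4),
    (1/(l2+l3) - 1/(l3+l4)) * (p 0 * p 5) + (1/(l1+l4) - 1/(l1+l2)) * (p 2 * p 3),
    (1/(l2+l4) - 1/(l2+l3)) * (p 0 * p 4) + (1/(l1+l3) - 1/(l1+l4)) * (p 1 * p 3)]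

/-- The point of `s₊` (`ε = 1`) or `s₋` (`ε = -1`) with parameters `(a₁,a₂,a₃)`. -/
noncomputable def sPoint (l1 l2 l3 l4 ε a₁ a₂ a₃ : ℝ) : Fin 6 → ℝ :=
  ![a₁/(l1+l4), a₂/(l2+l4), a₃/(l3+l4),
    ε * a₁/(l2+l3), ε * a₂/(l1+l3), ε * a₃/(l1+l2)]

/-- The Casimir function `C₁` on `so(4) ≅ ℝ⁶`. -/
noncomputable def C1fn (p : Fin 6 → ℝ) : ℝ :=
  (1/2) * (p 0^2 + p 1^2 + p 2^2 + p 3^2 + p 4^2 + p 5^2)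

/-- The Casimir function `C₂` on `so(4) ≅ ℝ⁶`. -/
noncomputable def C2fn (p : Fin 6 → ℝ) : ℝ :=
  p 0 * p 3 + p 1 * p 4 + p 2 * p 5

/-- Mishchenko's additional first integral `I` of the SO(4) free rigid body. -/
noncomputable def Ifn (l1 l2 l3 l4 : ℝ) (p : Fin 6 → ℝ) : ℝ :=
  (l2^2+l3^2) * p 0^2 + (l1^2+l3^2) * p 1^2 + (l1^2+l2^2) * p 2^2 +
    (l1^2+l4^2) * p 3^2 + (l2^2+l4^2) * p 4^2 + (l3^2+l4^2) * p 5^2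

lemma fderiv_Ifn_apply (l1 l2 l3 l4 : ℝ) (p v : Fin 6 → ℝ) :
    fderiv ℝ (Ifn l1 l2 l3 l4) p v =
      2 * ((l2^2+l3^2) * p 0 * v 0 + (l1^2+l3^2) * p 1 * v 1 + (l1^2+l2^2) * p 2 * v 2 +
        (l1^2+l4^2) * p 3 * v 3 + (l2^2+l4^2) * p 4 * v 4 + (l3^2+l4^2) * p 5 * v 5) := by
  have h := fun i : Fin 6 => hasFDerivAt_apply (𝕜 := ℝ) (F' := fun _ : Fin 6 => ℝ) i p
  have H := ((((((((h 0).pow 2).const_mul (l2^2+l3^2)).add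
    (((h 1).pow 2).const_mul (l1^2+l3^2))).add
    (((h 2).pow 2).const_mul (l1^2+l2^2))).add
    (((h 3).pow 2).const_mul (l1^2+l4^2))).add
    (((h 4).pow 2).const_mul (l2^2+l4^2))).add
    (((h 5).pow 2).const_mul (l3^2+l4^2)))
  have H' : fderiv ℝ (Ifn l1 l2 l3 l4) p = _ := H.fderiv
  rw [H']
  simp
  ring

lemma fderiv_C1fn_apply (p v : Fin 6 → ℝ) :
    fderiv ℝ C1fn p v =
      p 0 * v 0 + p 1 * v 1 + p 2 * v 2 + p 3 * v 3 + p 4 * v 4 + p 5 * v 5 := by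
  have h := fun i : Fin 6 => hasFDerivAt_apply (𝕜 := ℝ) (F' := fun _ : Fin 6 => ℝ) i p
  have H := (((((((h 0).pow 2).add ((h 1).pow 2)).add ((h 2).pow 2)).add
    ((h 3).pow 2)).add ((h 4).pow 2)).add ((h 5).pow 2)).const_mul (1/2)
  have H' : fderiv ℝ C1fn p = _ := H.fderiv
  rw [H']
  simp
  ring

lemma fderiv_C2fn_apply (p v : Fin 6 → ℝ) :
    fderiv ℝ C2fn p v =
      p 3 * v 0 + p 4 * v 1 + p 5 * v 2 + p 0 * v 3 + p 1 * v 4 + p 2 * v 5 := by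
  have h := fun i : Fin 6 => hasFDerivAt_apply (𝕜 := ℝ) (F' := fun _ : Fin 6 => ℝ) i p
  have H := (((h 0).mul (h 3)).add ((h 1).mul (h 4))).add ((h 2).mul (h 5))
  have H' : fderiv ℝ C2fn p = _ := H.fderiv
  rw [H']
  simp
  ring

/-- The covector identity `dI = c dC₁ + d dC₂` at `p`, in coordinates. -/
lemma fderiv_eq_iff (l1 l2 l3 l4 c d : ℝ) (p : Fin 6 → ℝ) :
    fderiv ℝ (Ifn l1 l2 l3 l4) p = c • fderiv ℝ C1fn p + d • fderiv ℝ C2fn p ↔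
      (2 * (l2^2+l3^2) * p 0 = c * p 0 + d * p 3 ∧ 2 * (l1^2+l4^2) * p 3 = c * p 3 + d * p 0) ∧
      (2 * (l1^2+l3^2) * p 1 = c * p 1 + d * p 4 ∧ 2 * (l2^2+l4^2) * p 4 = c * p 4 + d * p 1) ∧
      (2 * (l1^2+l2^2) * p 2 = c * p 2 + d * p 5 ∧
        2 * (l3^2+l4^2) * p 5 = c * p 5 + d * p 2) := by
  constructor
  · intro h
    have key : ∀ v : Fin 6 → ℝ, _ := fun v => DFunLike.congr_fun h v
    simp only [add_apply, smul_apply, smul_eq_mul,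
      fderiv_Ifn_apply, fderiv_C1fn_apply, fderiv_C2fn_apply] at key
    have k0 := key ![1, 0, 0, 0, 0, 0]
    have k1 := key ![0, 1, 0, 0, 0, 0]
    have k2 := key ![0, 0, 1, 0, 0, 0]
    have k3 := key ![0, 0, 0, 1, 0, 0]
    have k4 := key ![0, 0, 0, 0, 1, 0]
    have k5 := key ![0, 0, 0, 0, 0, 1]
    simp at k0 k1 k2 k3 k4 k5
    refine ⟨⟨?_, ?_⟩, ⟨?_, ?_⟩, ?_, ?_⟩ <;> linarith
  · rintro ⟨⟨k0, k3⟩, ⟨k1, k4⟩, k2, k5⟩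
    ext1 v
    simp only [add_apply, smul_apply, smul_eq_mul,
      fderiv_Ifn_apply, fderiv_C1fn_apply, fderiv_C2fn_apply]
    linear_combination v 0 * k0 + v 1 * k1 + v 2 * k2 + v 3 * k3 + v 4 * k4 + v 5 * k5

lemma exists_pair_solution (A B x y : ℝ) (h : x^2 ≠ y^2) :
    ∃ c d : ℝ, 2 * A * x = c * x + d * y ∧ 2 * B * y = c * y + d * x := by
  have h' : x^2 - y^2 ≠ 0 := sub_ne_zero.mpr h
  -- Cramer's rule for the system with matrix `!![x, y; y, x]`.
  refine ⟨(2 * A * x^2 - 2 * B * y^2) / (x^2 - y^2), (2 * B - 2 * A) * x * y / (x^2 - y^2), ?_, ?_⟩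
  · field_simp
    ring
  · field_simp
    ring

lemma pair_product {A B c d x y : ℝ} (hx : x ≠ 0) (hy : y ≠ 0)
    (h1 : 2 * A * x = c * x + d * y) (h2 : 2 * B * y = c * y + d * x) :
    (2 * A - c) * (2 * B - c) = d^2 := by
  apply mul_right_cancel₀ (mul_ne_zero hx hy)
  linear_combination (2 * B * y - c * y) * h1 + d * y * h2

/-- Two pairs with all coordinates nonzero and the same `A + B` have the same `A * B`. -/
lemma pairs_mul_eq {A B A' B' c d x y x' y' : ℝ}
    (hx : x ≠ 0) (hy : y ≠ 0) (hx' : x' ≠ 0) (hy' : y' ≠ 0)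
    (h : 2 * A * x = c * x + d * y ∧ 2 * B * y = c * y + d * x)
    (h' : 2 * A' * x' = c * x' + d * y' ∧ 2 * B' * y' = c * y' + d * x')
    (hs : A + B = A' + B') : A * B = A' * B' := by
  have e := pair_product hx hy h.1 h.2
  have e' := pair_product hx' hy' h'.1 h'.2
  linear_combination (e - e') / 4 + c / 2 * hs

lemma sq_sub_sq_pos {a b : ℝ} (h : b < a) (hp : 0 < a + b) : 0 < a^2 - b^2 := by
  rw [sq_sub_sq]
  exact mul_pos hp (sub_pos.mpr h)

/-- (i) at a point of `t₁ ∪ t₂ ∪ t₃` whose two possibly nonzero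
coordinates `(α,β)` satisfy `α² ≠ β²`, the gradient of `I` lies in the span of
the gradients of `C₁` and `C₂` (expressed via differentials); (ii) at a point
of `s₊ ∪ s₋` with at least two of `a₁,a₂,a₃` nonzero, it does not. -/
theorem stmt9 (l1 l2 l3 l4 : ℝ)
    (h12 : l2 < l1) (h23 : l3 < l2) (h34 : l4 < l3)
    (hp12 : 0 < l1 + l2) (hp13 : 0 < l1 + l3) (hp14 : 0 < l1 + l4)
    (hp23 : 0 < l2 + l3) (hp24 : 0 < l2 + l4) (hp34 : 0 < l3 + l4) :
    (∀ p : Fin 6 → ℝ,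
      ((p 1 = 0 ∧ p 2 = 0 ∧ p 4 = 0 ∧ p 5 = 0 ∧ (p 0)^2 ≠ (p 3)^2) ∨
       (p 0 = 0 ∧ p 2 = 0 ∧ p 3 = 0 ∧ p 5 = 0 ∧ (p 1)^2 ≠ (p 4)^2) ∨
       (p 0 = 0 ∧ p 1 = 0 ∧ p 3 = 0 ∧ p 4 = 0 ∧ (p 2)^2 ≠ (p 5)^2)) →
      ∃ c d : ℝ, fderiv ℝ (Ifn l1 l2 l3 l4) p =
        c • fderiv ℝ C1fn p + d • fderiv ℝ C2fn p) ∧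
    (∀ ε a₁ a₂ a₃ : ℝ, (ε = 1 ∨ ε = -1) →
      ((a₁ ≠ 0 ∧ a₂ ≠ 0) ∨ (a₁ ≠ 0 ∧ a₃ ≠ 0) ∨ (a₂ ≠ 0 ∧ a₃ ≠ 0)) →
      ¬∃ c d : ℝ, fderiv ℝ (Ifn l1 l2 l3 l4) (sPoint l1 l2 l3 l4 ε a₁ a₂ a₃) =
        c • fderiv ℝ C1fn (sPoint l1 l2 l3 l4 ε a₁ a₂ a₃) +
          d • fderiv ℝ C2fn (sPoint l1 l2 l3 l4 ε a₁ a₂ a₃)) := by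
  constructor
  · rintro p (⟨h1, h2, h4, h5, h⟩ | ⟨h0, h2, h3, h5, h⟩ | ⟨h0, h1, h3, h4, h⟩)
    · obtain ⟨c, d, e, e'⟩ := exists_pair_solution (l2^2+l3^2) (l1^2+l4^2) _ _ h
      exact ⟨c, d, (fderiv_eq_iff ..).2 ⟨⟨e, e'⟩, by simp [h1, h4], by simp [h2, h5]⟩⟩
    · obtain ⟨c, d, e, e'⟩ := exists_pair_solution (l1^2+l3^2) (l2^2+l4^2) _ _ h
      exact ⟨c, d, (fderiv_eq_iff ..).2 ⟨by simp [h0, h3], ⟨e, e'⟩, by simp [h2, h5]⟩⟩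
    · obtain ⟨c, d, e, e'⟩ := exists_pair_solution (l1^2+l2^2) (l3^2+l4^2) _ _ h
      exact ⟨c, d, (fderiv_eq_iff ..).2 ⟨by simp [h0, h3], by simp [h1, h4], ⟨e, e'⟩⟩⟩
  · rintro ε a₁ a₂ a₃ hε ha ⟨c, d, hcd⟩
    have hε0 : ε ≠ 0 := by rcases hε with rfl | rfl <;> norm_num
    obtain ⟨e1, e2, e3⟩ := (fderiv_eq_iff ..).1 hcd
    have hx {a u : ℝ} (ha : a ≠ 0) (hu : 0 < u) : a / u ≠ 0 := div_ne_zero ha hu.ne'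
    have hy {a u : ℝ} (ha : a ≠ 0) (hu : 0 < u) : ε * a / u ≠ 0 :=
      div_ne_zero (mul_ne_zero hε0 ha) hu.ne'
    rcases ha with ⟨ha, hb⟩ | ⟨ha, hb⟩ | ⟨ha, hb⟩
    · have e := pairs_mul_eq (hx ha hp14) (hy ha hp23) (hx hb hp24) (hy hb hp13) e1 e2 (by ring)
      refine (mul_pos (sq_sub_sq_pos h12 hp12) (sq_sub_sq_pos h34 hp34)).ne' ?_
      linear_combination e
    · have e := pairs_mul_eq (hx ha hp14) (hy ha hp23) (hx hb hp34) (hy hb hp12) e1 e3 (by ring)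
      refine (mul_pos (sq_sub_sq_pos (h23.trans h12) hp13)
        (sq_sub_sq_pos (h34.trans h23) hp24)).ne' ?_
      linear_combination e
    · have e := pairs_mul_eq (hx ha hp24) (hy ha hp13) (hx hb hp34) (hy hb hp12) e2 e3 (by ring)
      refine (mul_pos (sq_sub_sq_pos (h34.trans (h23.trans h12)) hp14)
        (sq_sub_sq_pos h23 hp23)).ne' ?_
      linear_combination e
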